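/- arXiv:1209.4224 — 5 statements merged into one kernel-verified Lean document; each statement's English description precedes it below -/
import Mathlib

section
/- Assume the ax+b vessel conditions for data (ℋ, ℰ, A₁, A₂, Φ, σ₁, σ₂, γ, γ_*). Let u, y : {a ∈ ℝ : a > 0} × ℝ → ℰ and x : {a ∈ ℝ : a > 0} × ℝ → ℋ be differentiable functions satisfying, for all (a,b) with a > 0: i·a·∂x/∂a(a,b) + A₁x(a,b) = Φ*σ₁u(a,b), i·a·∂x/∂b(a,b) + A₂x(a,b) = Φ*σ₂u(a,b), and y(a,b) = u(a,b) − i·Φx(a,b). Then for all (a,b) with a > 0: i·a·∂x/∂a(a,b) + A₁*x(a,b) = Φ*σ₁y(a,b), i·a·∂x/∂b(a,b) + A₂*x(a,b) = Φ*σ₂y(a,b), and u(a,b) = y(a,b) + i·Φx(a,b). That is, (y, x, u) is a trajectory of the adjoint system. -/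
open ContinuousLinearMap

/-- The ax+b vessel conditions for data `(ℋ, ℰ, A₁, A₂, Φ, σ₁, σ₂, γ, γ_*)`: the vessel
conditions for the two-dimensional Lie algebra with basis `X₁, X₂` and `[X₁, X₂] = X₂`. -/
structure IsAxbVessel {H : Type*} [NormedAddCommGroup H] [InnerProductSpace ℂ H]
    [CompleteSpace H]
    {E : Type*} [NormedAddCommGroup E] [InnerProductSpace ℂ E] [CompleteSpace E]
    (A₁ A₂ : H →L[ℂ] H) (Φ : H →L[ℂ] E) (σ₁ σ₂ γ γs : E →L[ℂ] E) : Prop where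
  comm : A₁ ∘L A₂ - A₂ ∘L A₁ = Complex.I • A₂
  σ₁_sa : adjoint σ₁ = σ₁
  σ₂_sa : adjoint σ₂ = σ₂
  second : γ - adjoint γ = Complex.I • σ₂
  second_s : γs - adjoint γs = Complex.I • σ₂
  colligation₁ : A₁ - adjoint A₁ = Complex.I • (adjoint Φ ∘L σ₁ ∘L Φ)
  colligation₂ : A₂ - adjoint A₂ = Complex.I • (adjoint Φ ∘L σ₂ ∘L Φ)
  input : σ₁ ∘L Φ ∘L adjoint A₂ - σ₂ ∘L Φ ∘L adjoint A₁ = γ ∘L Φ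
  output : σ₁ ∘L Φ ∘L A₂ - σ₂ ∘L Φ ∘L A₁ = γs ∘L Φ
  linkage : γs - γ = Complex.I •
      (σ₁ ∘L Φ ∘L adjoint Φ ∘L σ₂ - σ₂ ∘L Φ ∘L adjoint Φ ∘L σ₁)

/-! With `B = Φ* σ`, the colligation condition `A - A* = i Φ* σ Φ` reads `A - A* = i B Φ`. Hence
replacing `u` by `y = u - i Φ x` lowers the forcing term `B u` by exactly `(A - A*) x`, at each
point of the domain and for each of the two equations separately. -/

section Feedback

variable {R H E G : Type*} [CommRing R]
  [AddCommGroup H] [Module R H] [TopologicalSpace H]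
  [AddCommGroup E] [Module R E] [TopologicalSpace E]
  [AddCommGroup G] [Module R G] [TopologicalSpace G] [IsTopologicalAddGroup G]
  [ContinuousConstSMul R G]

theorem add_apply_eq_apply_iff_of_sub_eq_smul_comp {A A' : H →L[R] G} {B : E →L[R] G}
    {Φ : H →L[R] E} {c : R} (hA : A - A' = c • (B ∘L Φ)) (w : G) (x : H) (u : E) :
    w + A x = B u ↔ w + A' x = B (u - c • Φ x) := by
  have forcing_eq : B (u - c • Φ x) = B u - (A x - A' x) := by
    rw [map_sub, map_smul, ← sub_apply, hA, smul_apply, comp_apply]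
  rw [forcing_eq, eq_sub_iff_add_eq, add_assoc, add_sub_cancel]

end Feedback

theorem add_apply_eq_adjoint_apply_iff_of_colligation
    {H : Type*} [NormedAddCommGroup H] [InnerProductSpace ℂ H] [CompleteSpace H]
    {E : Type*} [NormedAddCommGroup E] [InnerProductSpace ℂ E] [CompleteSpace E]
    {A : H →L[ℂ] H} {Φ : H →L[ℂ] E} {σ : E →L[ℂ] E}
    (hA : A - adjoint A = Complex.I • (adjoint Φ ∘L σ ∘L Φ)) (w x : H) (u : E) :
    w + A x = adjoint Φ (σ u) ↔
      w + adjoint A x = adjoint Φ (σ (u - Complex.I • Φ x)) :=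
  add_apply_eq_apply_iff_of_sub_eq_smul_comp (B := adjoint Φ ∘L σ) hA w x u

theorem stmt_3_general {H : Type*} [NormedAddCommGroup H] [InnerProductSpace ℂ H] [CompleteSpace H]
    {E : Type*} [NormedAddCommGroup E] [InnerProductSpace ℂ E] [CompleteSpace E]
    (A₁ A₂ : H →L[ℂ] H) (Φ : H →L[ℂ] E) (σ₁ σ₂ : E →L[ℂ] E)
    (hA₁ : A₁ - adjoint A₁ = Complex.I • (adjoint Φ ∘L σ₁ ∘L Φ))
    (hA₂ : A₂ - adjoint A₂ = Complex.I • (adjoint Φ ∘L σ₂ ∘L Φ))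
    (u y : ℝ → ℝ → E) (x : ℝ → ℝ → H) (xa xb : ℝ → ℝ → H)
    (_hxa : ∀ a b : ℝ, 0 < a → HasDerivAt (fun t => x t b) (xa a b) a)
    (_hxb : ∀ a b : ℝ, 0 < a → HasDerivAt (fun t => x a t) (xb a b) b)
    (hsys₁ : ∀ a b : ℝ, 0 < a →
      (Complex.I * (a : ℂ)) • xa a b + A₁ (x a b) = adjoint Φ (σ₁ (u a b)))
    (hsys₂ : ∀ a b : ℝ, 0 < a →
      (Complex.I * (a : ℂ)) • xb a b + A₂ (x a b) = adjoint Φ (σ₂ (u a b)))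
    (hout : ∀ a b : ℝ, 0 < a → y a b = u a b - Complex.I • Φ (x a b)) :
    ∀ a b : ℝ, 0 < a →
      (Complex.I * (a : ℂ)) • xa a b + adjoint A₁ (x a b) = adjoint Φ (σ₁ (y a b)) ∧
      (Complex.I * (a : ℂ)) • xb a b + adjoint A₂ (x a b) = adjoint Φ (σ₂ (y a b)) ∧
      u a b = y a b + Complex.I • Φ (x a b) := by
  intro a b ha
  rw [hout a b ha]
  exact ⟨(add_apply_eq_adjoint_apply_iff_of_colligation hA₁ _ _ _).mp (hsys₁ a b ha),
    (add_apply_eq_adjoint_apply_iff_of_colligation hA₂ _ _ _).mp (hsys₂ a b ha),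
    (sub_add_cancel _ _).symm⟩

/-- If `(u, x, y)` is a trajectory of the system associated to an ax+b vessel
on the half-plane `{a > 0}`, then `(y, x, u)` is a trajectory of the adjoint system. -/
theorem stmt_3 {H : Type*} [NormedAddCommGroup H] [InnerProductSpace ℂ H] [CompleteSpace H]
    {E : Type*} [NormedAddCommGroup E] [InnerProductSpace ℂ E] [CompleteSpace E]
    (A₁ A₂ : H →L[ℂ] H) (Φ : H →L[ℂ] E) (σ₁ σ₂ γ γs : E →L[ℂ] E)
    (hV : IsAxbVessel A₁ A₂ Φ σ₁ σ₂ γ γs)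
    (u y : ℝ → ℝ → E) (x : ℝ → ℝ → H) (xa xb : ℝ → ℝ → H)
    (hu : DifferentiableOn ℝ (fun p : ℝ × ℝ => u p.1 p.2) {p : ℝ × ℝ | 0 < p.1})
    (hy : DifferentiableOn ℝ (fun p : ℝ × ℝ => y p.1 p.2) {p : ℝ × ℝ | 0 < p.1})
    (hxa : ∀ a b : ℝ, 0 < a → HasDerivAt (fun t => x t b) (xa a b) a)
    (hxb : ∀ a b : ℝ, 0 < a → HasDerivAt (fun t => x a t) (xb a b) b)
    (hsys₁ : ∀ a b : ℝ, 0 < a →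
      (Complex.I * (a : ℂ)) • xa a b + A₁ (x a b) = adjoint Φ (σ₁ (u a b)))
    (hsys₂ : ∀ a b : ℝ, 0 < a →
      (Complex.I * (a : ℂ)) • xb a b + A₂ (x a b) = adjoint Φ (σ₂ (u a b)))
    (hout : ∀ a b : ℝ, 0 < a → y a b = u a b - Complex.I • Φ (x a b)) :
    ∀ a b : ℝ, 0 < a →
      (Complex.I * (a : ℂ)) • xa a b + adjoint A₁ (x a b) = adjoint Φ (σ₁ (y a b)) ∧
      (Complex.I * (a : ℂ)) • xb a b + adjoint A₂ (x a b) = adjoint Φ (σ₂ (y a b)) ∧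
      u a b = y a b + Complex.I • Φ (x a b) := by
  exact stmt_3_general A₁ A₂ Φ σ₁ σ₂ hV.colligation₁ hV.colligation₂ u y x xa xb hxa hxb
    hsys₁ hsys₂ hout
end

section
/- Assume the ax+b vessel conditions for data (ℋ, ℰ, A₁, A₂, Φ, σ₁, σ₂, γ, γ_*). Let u : {a ∈ ℝ : a > 0} × ℝ → ℰ be differentiable and x : {a ∈ ℝ : a > 0} × ℝ → ℋ be twice continuously differentiable, satisfying for all (a,b) with a > 0: i·a·∂x/∂a + A₁x = Φ*σ₁u and i·a·∂x/∂b + A₂x = Φ*σ₂u. Set y = u − i·Φx. Then for all (a,b) with a > 0: Φ*( a·σ₂·∂u/∂a(a,b) − a·σ₁·∂u/∂b(a,b) + i·γ·u(a,b) ) = 0 and Φ*( a·σ₂·∂y/∂a(a,b) − a·σ₁·∂y/∂b(a,b) + i·γ_*·y(a,b) ) = 0. That is, the input satisfies the non-strict input compatibility condition and the output satisfies the non-strict output compatibility condition. -/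
open ContinuousLinearMap

/-!
Equality of the mixed partial derivatives of `x` turns the two state equations
`i a x_a + A₁ x = B₁ u`, `i a x_b + A₂ x = B₂ u` into one relation that the input must satisfy.
Differentiating the first in `b` and the second in `a`, subtracting, and eliminating `x_a` and
`x_b` leaves `x` only in the combination `([A₁, A₂] - i A₂) x = 0`, so that
`a (B₂ u_a - B₁ u_b) = B₂ u + i (A₁ B₂ - A₂ B₁) u`. For `B_k = Φ* σ_k` the adjoint of the input
vessel condition and `γ - γ* = i σ₂` identify the right-hand side with `-i Φ* γ u`. The output needs
no further differentiation: by the output vessel condition and the linkage condition, the two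
compatibility expressions agree already before `Φ*` is applied.
-/

open Filter Topology

section MixedPartials

variable {𝕜 : Type*} [NontriviallyNormedField 𝕜] {V F : Type*} [NormedAddCommGroup V]
  [NormedSpace 𝕜 V] [NormedAddCommGroup F] [NormedSpace 𝕜 F]

theorem hasFDerivAt_of_eventually_hasLineDerivAt {f g : V → F} {p v : V}
    (hf : ContDiffAt 𝕜 2 f p) (hg : ∀ᶠ q in 𝓝 p, HasLineDerivAt 𝕜 f (g q) q v) :
    HasFDerivAt g ((fderiv 𝕜 (fderiv 𝕜 f) p).flip v) p := by
  have hD : HasFDerivAt (fderiv 𝕜 f) (fderiv 𝕜 (fderiv 𝕜 f) p) p :=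
    ((hf.fderiv_right (m := 1) le_rfl).differentiableAt one_ne_zero).hasFDerivAt
  have hgD : g =ᶠ[𝓝 p] fun q ↦ fderiv 𝕜 f q v := by
    filter_upwards [hg, hf.eventually (by simp)] with q hgq hfq
    exact hgq.unique ((hfq.differentiableAt two_ne_zero).hasFDerivAt.hasLineDerivAt v)
  have hDv : HasFDerivAt (fun q ↦ fderiv 𝕜 f q v) ((fderiv 𝕜 (fderiv 𝕜 f) p).flip v) p := by
    simpa using hD.clm_apply (hasFDerivAt_const v p)
  exact hDv.congr_of_eventuallyEq hgD

theorem exists_hasLineDerivAt_mixed [IsRCLikeNormedField 𝕜] {f g h : V → F} {p v w : V}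
    (hf : ContDiffAt 𝕜 2 f p) (hg : ∀ᶠ q in 𝓝 p, HasLineDerivAt 𝕜 f (g q) q v)
    (hh : ∀ᶠ q in 𝓝 p, HasLineDerivAt 𝕜 f (h q) q w) :
    ∃ d : F, HasLineDerivAt 𝕜 g d p w ∧ HasLineDerivAt 𝕜 h d p v := by
  have hsymm : IsSymmSndFDerivAt 𝕜 f p := hf.isSymmSndFDerivAt (by simp)
  refine ⟨fderiv 𝕜 (fderiv 𝕜 f) p w v,
    (hasFDerivAt_of_eventually_hasLineDerivAt hf hg).hasLineDerivAt w, ?_⟩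
  rw [hsymm.eq w v]
  exact (hasFDerivAt_of_eventually_hasLineDerivAt hf hh).hasLineDerivAt v

theorem hasDerivAt_comp_const_add_zero_iff {f : 𝕜 → F} {f' : F} {a : 𝕜} :
    HasDerivAt (fun t ↦ f (a + t)) f' 0 ↔ HasDerivAt f f' a := by
  refine ⟨fun h ↦ ?_, fun h ↦ HasDerivAt.comp_const_add a 0 (by simpa using h)⟩
  simpa using HasDerivAt.comp_const_add (-a) a (f := fun t ↦ f (a + t)) (by simpa using h)

theorem hasLineDerivAt_one_zero_iff {f : 𝕜 × 𝕜 → F} {f' : F} {a b : 𝕜} :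
    HasLineDerivAt 𝕜 f f' (a, b) (1, 0) ↔ HasDerivAt (fun t ↦ f (t, b)) f' a := by
  simpa [HasLineDerivAt] using hasDerivAt_comp_const_add_zero_iff (f := fun t ↦ f (t, b))

theorem hasLineDerivAt_zero_one_iff {f : 𝕜 × 𝕜 → F} {f' : F} {a b : 𝕜} :
    HasLineDerivAt 𝕜 f f' (a, b) (0, 1) ↔ HasDerivAt (fun t ↦ f (a, t)) f' b := by
  simpa [HasLineDerivAt] using hasDerivAt_comp_const_add_zero_iff (f := fun t ↦ f (a, t))

theorem exists_hasDerivAt_mixed_partials [IsRCLikeNormedField 𝕜] {x xa xb : 𝕜 → 𝕜 → F} {a b : 𝕜}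
    (hx : ContDiffAt 𝕜 2 (fun p : 𝕜 × 𝕜 ↦ x p.1 p.2) (a, b))
    (hxa : ∀ᶠ p in 𝓝 (a, b), HasDerivAt (fun t ↦ x t p.2) (xa p.1 p.2) p.1)
    (hxb : ∀ᶠ p in 𝓝 (a, b), HasDerivAt (fun t ↦ x p.1 t) (xb p.1 p.2) p.2) :
    ∃ xab : F, HasDerivAt (fun t ↦ xa a t) xab b ∧ HasDerivAt (fun t ↦ xb t b) xab a := by
  obtain ⟨xab, hab, hba⟩ := exists_hasLineDerivAt_mixed
    (g := fun p ↦ xa p.1 p.2) (h := fun p ↦ xb p.1 p.2) hx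
    (hxa.mono fun _ h ↦ hasLineDerivAt_one_zero_iff.2 h)
    (hxb.mono fun _ h ↦ hasLineDerivAt_zero_one_iff.2 h)
  exact ⟨xab, hasLineDerivAt_zero_one_iff.1 hab, hasLineDerivAt_one_zero_iff.1 hba⟩

end MixedPartials

theorem smul_add_map_eq_of_eventually_smul_add_map_eq {𝕜 𝕜' : Type*} [NontriviallyNormedField 𝕜]
    [NontriviallyNormedField 𝕜'] [NormedAlgebra 𝕜 𝕜'] {V F G : Type*}
    [NormedAddCommGroup V] [NormedSpace 𝕜 V] [NormedAddCommGroup F] [NormedSpace 𝕜 F]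
    [NormedAddCommGroup G] [NormedSpace 𝕜 G] [NormedSpace 𝕜' G] [IsScalarTower 𝕜 𝕜' G]
    {c : 𝕜 → 𝕜'} {c' : 𝕜'} {v : 𝕜 → G} {v' : G} {x : 𝕜 → V} {x' : V} {u : 𝕜 → F} {u' : F} {s : 𝕜}
    (A : V →L[𝕜] G) (B : F →L[𝕜] G)
    (hc : HasDerivAt c c' s) (hv : HasDerivAt v v' s) (hx : HasDerivAt x x' s)
    (hu : HasDerivAt u u' s) (h : ∀ᶠ t in 𝓝 s, c t • v t + A (x t) = B (u t)) :
    c s • v' + c' • v s + A x' = B u' := by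
  have hleft : HasDerivAt (fun t ↦ c t • v t + A (x t)) (c s • v' + c' • v s + A x') s :=
    (hc.smul hv).add (A.hasFDerivAt.comp_hasDerivAt s hx)
  exact hleft.unique ((B.hasFDerivAt.comp_hasDerivAt s hu).congr_of_eventuallyEq h)

theorem smul_eq_I_smul_sub {V : Type*} [AddCommGroup V] [Module ℂ V] {a : ℂ} {v p q : V}
    (h : (Complex.I * a) • v + p = q) : a • v = Complex.I • (p - q) := by
  rw [← h, sub_add_cancel_right, smul_neg, smul_smul, ← mul_assoc, Complex.I_mul_I, neg_one_mul,
    neg_smul, neg_neg]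

/-- The expression `a σ₂ v_a - a σ₁ v_b + i γ v` in a signal `v` with partial derivatives `va`, `vb`
at a point with first coordinate `a`. The strict compatibility condition asks that it vanish, the
non-strict one that `Φ*` annihilate it; the input uses the coefficient `γ` and the output `γ_*`. -/
def compatibilityDefect {E : Type*} [NormedAddCommGroup E] [NormedSpace ℂ E]
    (σ₁ σ₂ γ : E →L[ℂ] E) (a : ℂ) (v va vb : E) : E :=
  a • σ₂ va - a • σ₁ vb + Complex.I • γ v

section OverdeterminedSystem

variable {H E : Type*} [NormedAddCommGroup H] [NormedSpace ℂ H]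
  [NormedAddCommGroup E] [NormedSpace ℂ E] {A₁ A₂ : H →L[ℂ] H}

theorem input_deriv_sub_eq_of_axb_system {B₁ B₂ : E →L[ℂ] H} {u : ℝ → ℝ → E} {ua ub : E}
    {x xa xb : ℝ → ℝ → H} {a b : ℝ}
    (hx : ContDiffAt ℝ 2 (fun p : ℝ × ℝ ↦ x p.1 p.2) (a, b))
    (hua : HasDerivAt (fun t ↦ u t b) ua a) (hub : HasDerivAt (fun t ↦ u a t) ub b)
    (hxa : ∀ᶠ p in 𝓝 (a, b), HasDerivAt (fun t ↦ x t p.2) (xa p.1 p.2) p.1)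
    (hxb : ∀ᶠ p in 𝓝 (a, b), HasDerivAt (fun t ↦ x p.1 t) (xb p.1 p.2) p.2)
    (hsys₁ : ∀ᶠ p in 𝓝 (a, b),
      (Complex.I * (p.1 : ℂ)) • xa p.1 p.2 + A₁ (x p.1 p.2) = B₁ (u p.1 p.2))
    (hsys₂ : ∀ᶠ p in 𝓝 (a, b),
      (Complex.I * (p.1 : ℂ)) • xb p.1 p.2 + A₂ (x p.1 p.2) = B₂ (u p.1 p.2)) :
    B₂ ua - B₁ ub = Complex.I • xb a b + A₂ (xa a b) - A₁ (xb a b) := by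
  obtain ⟨xab, hab, hba⟩ := exists_hasDerivAt_mixed_partials hx hxa hxb
  have hcoeff : HasDerivAt (fun t : ℝ ↦ Complex.I * (t : ℂ)) Complex.I a := by
    simpa using (Complex.ofRealCLM.hasDerivAt (x := a)).const_mul Complex.I
  have hvert : ContinuousAt (fun t ↦ (a, t)) b := by fun_prop
  have hhoriz : ContinuousAt (fun t ↦ (t, b)) a := by fun_prop
  have hsys₁_b : (Complex.I * (a : ℂ)) • xab + (0 : ℂ) • xa a b + A₁ (xb a b) = B₁ ub :=
    smul_add_map_eq_of_eventually_smul_add_map_eq (A₁.restrictScalars ℝ) (B₁.restrictScalars ℝ)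
      (hasDerivAt_const b (Complex.I * (a : ℂ))) hab hxb.self_of_nhds hub (hvert.eventually hsys₁)
  have hsys₂_a : (Complex.I * (a : ℂ)) • xab + Complex.I • xb a b + A₂ (xa a b) = B₂ ua :=
    smul_add_map_eq_of_eventually_smul_add_map_eq (A₂.restrictScalars ℝ) (B₂.restrictScalars ℝ)
      hcoeff hba hxa.self_of_nhds hua (hhoriz.eventually hsys₂)
  rw [← hsys₁_b, ← hsys₂_a]
  module

theorem smul_state_deriv_eq_of_axb_system {B₁ B₂ : E →L[ℂ] H}
    (hcomm : A₁ ∘L A₂ - A₂ ∘L A₁ = Complex.I • A₂) {u : E} {x xa xb : H} {a : ℂ}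
    (hsys₁ : (Complex.I * a) • xa + A₁ x = B₁ u) (hsys₂ : (Complex.I * a) • xb + A₂ x = B₂ u) :
    a • (Complex.I • xb + A₂ xa - A₁ xb) =
      (B₂ + Complex.I • (A₁ ∘L B₂ - A₂ ∘L B₁)) u := by
  have hcomm_x : A₁ (A₂ x) - A₂ (A₁ x) = Complex.I • A₂ x := congr($hcomm x)
  calc a • (Complex.I • xb + A₂ xa - A₁ xb)
      = Complex.I • (a • xb) + A₂ (a • xa) - A₁ (a • xb) := by
        simp only [map_smul]; module
    _ = (Complex.I * Complex.I) • (A₂ x - B₂ u) + Complex.I • (A₁ (B₂ u) - A₂ (B₁ u))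
          - Complex.I • (A₁ (A₂ x) - A₂ (A₁ x)) := by
        rw [smul_eq_I_smul_sub hsys₁, smul_eq_I_smul_sub hsys₂]
        simp only [map_smul, map_sub]; module
    _ = B₂ u + Complex.I • (A₁ (B₂ u) - A₂ (B₁ u)) := by
        rw [hcomm_x, smul_smul, Complex.I_mul_I]; module

theorem compatibilityDefect_output_eq_input {Φ : H →L[ℂ] E} {Ψ : E →L[ℂ] H}
    {σ₁ σ₂ γ γs : E →L[ℂ] E}
    (houtput : σ₁ ∘L Φ ∘L A₂ - σ₂ ∘L Φ ∘L A₁ = γs ∘L Φ)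
    (hlinkage : γs - γ = Complex.I • (σ₁ ∘L Φ ∘L Ψ ∘L σ₂ - σ₂ ∘L Φ ∘L Ψ ∘L σ₁))
    {u ua ub : E} {x xa xb : H} {a : ℂ}
    (hsys₁ : (Complex.I * a) • xa + A₁ x = Ψ (σ₁ u))
    (hsys₂ : (Complex.I * a) • xb + A₂ x = Ψ (σ₂ u)) :
    compatibilityDefect σ₁ σ₂ γs a (u - Complex.I • Φ x) (ua - Complex.I • Φ xa)
      (ub - Complex.I • Φ xb) = compatibilityDefect σ₁ σ₂ γ a u ua ub := by
  have houtput_x : σ₁ (Φ (A₂ x)) - σ₂ (Φ (A₁ x)) = γs (Φ x) := congr($houtput x)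
  have hlinkage_u : γs u - γ u =
      Complex.I • (σ₁ (Φ (Ψ (σ₂ u))) - σ₂ (Φ (Ψ (σ₁ u)))) := congr($hlinkage u)
  unfold compatibilityDefect
  calc a • σ₂ (ua - Complex.I • Φ xa) - a • σ₁ (ub - Complex.I • Φ xb)
        + Complex.I • γs (u - Complex.I • Φ x)
      = a • σ₂ ua - a • σ₁ ub + Complex.I • γs u - (Complex.I * Complex.I) • γs (Φ x)
          + Complex.I • (σ₁ (Φ (a • xb)) - σ₂ (Φ (a • xa))) := by
        simp only [map_smul, map_sub]; module
    _ = a • σ₂ ua - a • σ₁ ub + Complex.I • γs u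
          + (Complex.I * Complex.I) • (σ₁ (Φ (A₂ x)) - σ₂ (Φ (A₁ x)) - γs (Φ x)
            - (σ₁ (Φ (Ψ (σ₂ u))) - σ₂ (Φ (Ψ (σ₁ u))))) := by
        rw [smul_eq_I_smul_sub hsys₁, smul_eq_I_smul_sub hsys₂]
        simp only [map_smul, map_sub]; module
    _ = a • σ₂ ua - a • σ₁ ub + Complex.I • γs u - Complex.I • (γs u - γ u) := by
        rw [houtput_x, hlinkage_u]; module
    _ = a • σ₂ ua - a • σ₁ ub + Complex.I • γ u := by module

end OverdeterminedSystem

section HilbertSpace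

variable {H E : Type*} [NormedAddCommGroup H] [InnerProductSpace ℂ H] [CompleteSpace H]
  [NormedAddCommGroup E] [InnerProductSpace ℂ E] [CompleteSpace E]
  {A₁ A₂ : H →L[ℂ] H} {Φ : H →L[ℂ] E} {σ₁ σ₂ γ γs : E →L[ℂ] E}

theorem adjoint_comp_eq_of_input (hσ₁ : adjoint σ₁ = σ₁) (hσ₂ : adjoint σ₂ = σ₂)
    (hγ : γ - adjoint γ = Complex.I • σ₂)
    (hinput : σ₁ ∘L Φ ∘L adjoint A₂ - σ₂ ∘L Φ ∘L adjoint A₁ = γ ∘L Φ) :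
    adjoint Φ ∘L σ₂ + Complex.I • (A₁ ∘L adjoint Φ ∘L σ₂ - A₂ ∘L adjoint Φ ∘L σ₁) =
      -(Complex.I • adjoint Φ ∘L γ) := by
  have hadjoint : A₂ ∘L adjoint Φ ∘L σ₁ - A₁ ∘L adjoint Φ ∘L σ₂ = adjoint Φ ∘L adjoint γ := by
    simpa only [map_sub, adjoint_comp, adjoint_adjoint, hσ₁, hσ₂, comp_assoc]
      using congr(adjoint $hinput)
  have hΦγ : adjoint Φ ∘L adjoint γ = adjoint Φ ∘L γ - Complex.I • adjoint Φ ∘L σ₂ := by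
    rw [← comp_smul, ← comp_sub, ← hγ, sub_sub_cancel]
  rw [← neg_sub (A₂ ∘L _), hadjoint, hΦγ, neg_sub, smul_sub, smul_smul, Complex.I_mul_I]
  module

theorem adjoint_compatibilityDefect_eq_zero
    (hcomm : A₁ ∘L A₂ - A₂ ∘L A₁ = Complex.I • A₂)
    (hσ₁ : adjoint σ₁ = σ₁) (hσ₂ : adjoint σ₂ = σ₂) (hγ : γ - adjoint γ = Complex.I • σ₂)
    (hinput : σ₁ ∘L Φ ∘L adjoint A₂ - σ₂ ∘L Φ ∘L adjoint A₁ = γ ∘L Φ)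
    {u : ℝ → ℝ → E} {ua ub : E} {x xa xb : ℝ → ℝ → H} {a b : ℝ}
    (hx : ContDiffAt ℝ 2 (fun p : ℝ × ℝ ↦ x p.1 p.2) (a, b))
    (hua : HasDerivAt (fun t ↦ u t b) ua a) (hub : HasDerivAt (fun t ↦ u a t) ub b)
    (hxa : ∀ᶠ p in 𝓝 (a, b), HasDerivAt (fun t ↦ x t p.2) (xa p.1 p.2) p.1)
    (hxb : ∀ᶠ p in 𝓝 (a, b), HasDerivAt (fun t ↦ x p.1 t) (xb p.1 p.2) p.2)
    (hsys₁ : ∀ᶠ p in 𝓝 (a, b),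
      (Complex.I * (p.1 : ℂ)) • xa p.1 p.2 + A₁ (x p.1 p.2) = adjoint Φ (σ₁ (u p.1 p.2)))
    (hsys₂ : ∀ᶠ p in 𝓝 (a, b),
      (Complex.I * (p.1 : ℂ)) • xb p.1 p.2 + A₂ (x p.1 p.2) = adjoint Φ (σ₂ (u p.1 p.2))) :
    adjoint Φ (compatibilityDefect σ₁ σ₂ γ a (u a b) ua ub) = 0 := by
  have hderiv : adjoint Φ (σ₂ ua) - adjoint Φ (σ₁ ub) =
      Complex.I • xb a b + A₂ (xa a b) - A₁ (xb a b) :=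
    input_deriv_sub_eq_of_axb_system (B₁ := adjoint Φ ∘L σ₁) (B₂ := adjoint Φ ∘L σ₂)
      hx hua hub hxa hxb hsys₁ hsys₂
  have helim : (a : ℂ) • (Complex.I • xb a b + A₂ (xa a b) - A₁ (xb a b)) =
      -(Complex.I • adjoint Φ (γ (u a b))) :=
    (smul_state_deriv_eq_of_axb_system (B₁ := adjoint Φ ∘L σ₁) (B₂ := adjoint Φ ∘L σ₂) hcomm
      hsys₁.self_of_nhds hsys₂.self_of_nhds).trans
      congr($(adjoint_comp_eq_of_input hσ₁ hσ₂ hγ hinput) (u a b))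
  simp only [compatibilityDefect, map_add, map_sub, map_smul]
  rw [← smul_sub, hderiv, helim, neg_add_cancel]

theorem stmt_5_general {U : Set (ℝ × ℝ)} (hU : IsOpen U)
    (hcomm : A₁ ∘L A₂ - A₂ ∘L A₁ = Complex.I • A₂)
    (hσ₁ : adjoint σ₁ = σ₁) (hσ₂ : adjoint σ₂ = σ₂) (hγ : γ - adjoint γ = Complex.I • σ₂)
    (hinput : σ₁ ∘L Φ ∘L adjoint A₂ - σ₂ ∘L Φ ∘L adjoint A₁ = γ ∘L Φ)
    (houtput : σ₁ ∘L Φ ∘L A₂ - σ₂ ∘L Φ ∘L A₁ = γs ∘L Φ)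
    (hlinkage : γs - γ = Complex.I •
      (σ₁ ∘L Φ ∘L adjoint Φ ∘L σ₂ - σ₂ ∘L Φ ∘L adjoint Φ ∘L σ₁))
    {u ua ub : ℝ → ℝ → E} {x xa xb : ℝ → ℝ → H}
    (hx : ContDiffOn ℝ 2 (fun p : ℝ × ℝ ↦ x p.1 p.2) U)
    (hua : ∀ a b, (a, b) ∈ U → HasDerivAt (fun t ↦ u t b) (ua a b) a)
    (hub : ∀ a b, (a, b) ∈ U → HasDerivAt (fun t ↦ u a t) (ub a b) b)
    (hxa : ∀ a b, (a, b) ∈ U → HasDerivAt (fun t ↦ x t b) (xa a b) a)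
    (hxb : ∀ a b, (a, b) ∈ U → HasDerivAt (fun t ↦ x a t) (xb a b) b)
    (hsys₁ : ∀ a b, (a, b) ∈ U →
      (Complex.I * (a : ℂ)) • xa a b + A₁ (x a b) = adjoint Φ (σ₁ (u a b)))
    (hsys₂ : ∀ a b, (a, b) ∈ U →
      (Complex.I * (a : ℂ)) • xb a b + A₂ (x a b) = adjoint Φ (σ₂ (u a b)))
    {y ya yb : ℝ → ℝ → E}
    (hy : ∀ a b, y a b = u a b - Complex.I • Φ (x a b))
    (hya : ∀ a b, ya a b = ua a b - Complex.I • Φ (xa a b))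
    (hyb : ∀ a b, yb a b = ub a b - Complex.I • Φ (xb a b))
    (a b : ℝ) (hab : (a, b) ∈ U) :
    adjoint Φ (compatibilityDefect σ₁ σ₂ γ a (u a b) (ua a b) (ub a b)) = 0 ∧
      adjoint Φ (compatibilityDefect σ₁ σ₂ γs a (y a b) (ya a b) (yb a b)) = 0 := by
  have hnhds : ∀ᶠ p in 𝓝 (a, b), p ∈ U := hU.mem_nhds hab
  have hinput_zero : adjoint Φ (compatibilityDefect σ₁ σ₂ γ a (u a b) (ua a b) (ub a b)) = 0 :=
    adjoint_compatibilityDefect_eq_zero hcomm hσ₁ hσ₂ hγ hinput (hx.contDiffAt hnhds)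
      (hua a b hab) (hub a b hab)
      (hnhds.mono fun p ↦ hxa p.1 p.2) (hnhds.mono fun p ↦ hxb p.1 p.2)
      (hnhds.mono fun p ↦ hsys₁ p.1 p.2) (hnhds.mono fun p ↦ hsys₂ p.1 p.2)
  refine ⟨hinput_zero, ?_⟩
  rw [hy, hya, hyb, compatibilityDefect_output_eq_input houtput hlinkage (hsys₁ a b hab)
    (hsys₂ a b hab), hinput_zero]

end HilbertSpace

/-- For any trajectory of the system of an ax+b vessel on the half-plane, the
input satisfies the non-strict input compatibility condition and the output satisfies the
non-strict output compatibility condition. -/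
theorem stmt_5 {H : Type*} [NormedAddCommGroup H] [InnerProductSpace ℂ H] [CompleteSpace H]
    {E : Type*} [NormedAddCommGroup E] [InnerProductSpace ℂ E] [CompleteSpace E]
    (A₁ A₂ : H →L[ℂ] H) (Φ : H →L[ℂ] E) (σ₁ σ₂ γ γs : E →L[ℂ] E)
    (hV : IsAxbVessel A₁ A₂ Φ σ₁ σ₂ γ γs)
    (u : ℝ → ℝ → E) (ua ub : ℝ → ℝ → E) (x : ℝ → ℝ → H) (xa xb : ℝ → ℝ → H)
    (hx2 : ContDiffOn ℝ 2 (fun p : ℝ × ℝ => x p.1 p.2) {p : ℝ × ℝ | 0 < p.1})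
    (hua : ∀ a b : ℝ, 0 < a → HasDerivAt (fun t => u t b) (ua a b) a)
    (hub : ∀ a b : ℝ, 0 < a → HasDerivAt (fun t => u a t) (ub a b) b)
    (hxa : ∀ a b : ℝ, 0 < a → HasDerivAt (fun t => x t b) (xa a b) a)
    (hxb : ∀ a b : ℝ, 0 < a → HasDerivAt (fun t => x a t) (xb a b) b)
    (hsys₁ : ∀ a b : ℝ, 0 < a →
      (Complex.I * (a : ℂ)) • xa a b + A₁ (x a b) = adjoint Φ (σ₁ (u a b)))
    (hsys₂ : ∀ a b : ℝ, 0 < a →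
      (Complex.I * (a : ℂ)) • xb a b + A₂ (x a b) = adjoint Φ (σ₂ (u a b)))
    (y : ℝ → ℝ → E) (ya yb : ℝ → ℝ → E)
    (hy : ∀ a b : ℝ, y a b = u a b - Complex.I • Φ (x a b))
    (hya : ∀ a b : ℝ, ya a b = ua a b - Complex.I • Φ (xa a b))
    (hyb : ∀ a b : ℝ, yb a b = ub a b - Complex.I • Φ (xb a b)) :
    ∀ a b : ℝ, 0 < a →
      adjoint Φ ((a : ℂ) • σ₂ (ua a b) - (a : ℂ) • σ₁ (ub a b)
        + Complex.I • γ (u a b)) = 0 ∧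
      adjoint Φ ((a : ℂ) • σ₂ (ya a b) - (a : ℂ) • σ₁ (yb a b)
        + Complex.I • γs (y a b)) = 0 :=
  stmt_5_general (U := {p | 0 < p.1}) (isOpen_lt continuous_const continuous_fst)
    hV.comm hV.σ₁_sa hV.σ₂_sa hV.second hV.input hV.output hV.linkage
    hx2 hua hub hxa hxb hsys₁ hsys₂ hy hya hyb
end

section
/- Let 𝔤 be a finite-dimensional real Lie algebra and let (ℋ, ℰ, ρ, Φ, σ, γ, γ_*) be a 𝔤-operator vessel. Then for all X, Y ∈ 𝔤: Φ*γ(X,Y) = ρ(Y)Φ*σ(X) − ρ(X)Φ*σ(Y) + i·Φ*σ([X,Y]). -/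
open ContinuousLinearMap

/-- A `𝔤`-operator vessel: Hilbert spaces `ℋ`, `ℰ`, a bounded operator `Φ : ℋ → ℰ`,
real-linear maps `ρ : 𝔤 → L(ℋ)` and `σ : 𝔤 → L(ℰ)`, and real-bilinear alternating maps
`γ, γ_* : 𝔤 × 𝔤 → L(ℰ)` satisfying the seven vessel conditions. -/
structure IsVessel {g : Type*} [LieRing g] [LieAlgebra ℝ g]
    {H : Type*} [NormedAddCommGroup H] [InnerProductSpace ℂ H] [CompleteSpace H]
    {E : Type*} [NormedAddCommGroup E] [InnerProductSpace ℂ E] [CompleteSpace E]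
    (ρ : g → H →L[ℂ] H) (Φ : H →L[ℂ] E) (σ : g → E →L[ℂ] E)
    (γ γs : g → g → E →L[ℂ] E) : Prop where
  ρ_add : ∀ X Y, ρ (X + Y) = ρ X + ρ Y
  ρ_smul : ∀ (r : ℝ) (X : g), ρ (r • X) = (r : ℂ) • ρ X
  σ_add : ∀ X Y, σ (X + Y) = σ X + σ Y
  σ_smul : ∀ (r : ℝ) (X : g), σ (r • X) = (r : ℂ) • σ X
  γ_addl : ∀ X Y Z, γ (X + Y) Z = γ X Z + γ Y Z
  γ_addr : ∀ X Y Z, γ X (Y + Z) = γ X Y + γ X Z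
  γ_smull : ∀ (r : ℝ) (X Y : g), γ (r • X) Y = (r : ℂ) • γ X Y
  γ_smulr : ∀ (r : ℝ) (X Y : g), γ X (r • Y) = (r : ℂ) • γ X Y
  γ_alt : ∀ X, γ X X = 0
  γs_addl : ∀ X Y Z, γs (X + Y) Z = γs X Z + γs Y Z
  γs_addr : ∀ X Y Z, γs X (Y + Z) = γs X Y + γs X Z
  γs_smull : ∀ (r : ℝ) (X Y : g), γs (r • X) Y = (r : ℂ) • γs X Y
  γs_smulr : ∀ (r : ℝ) (X Y : g), γs X (r • Y) = (r : ℂ) • γs X Y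
  γs_alt : ∀ X, γs X X = 0
  comm : ∀ X Y, ρ X ∘L ρ Y - ρ Y ∘L ρ X = Complex.I • ρ ⁅X, Y⁆
  σ_sa : ∀ X, adjoint (σ X) = σ X
  second : ∀ X Y, γ X Y - adjoint (γ X Y) = Complex.I • σ ⁅X, Y⁆
  second_s : ∀ X Y, γs X Y - adjoint (γs X Y) = Complex.I • σ ⁅X, Y⁆
  colligation : ∀ X, ρ X - adjoint (ρ X) = Complex.I • (adjoint Φ ∘L σ X ∘L Φ)
  input : ∀ X Y, σ X ∘L Φ ∘L adjoint (ρ Y) - σ Y ∘L Φ ∘L adjoint (ρ X) = γ X Y ∘L Φ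
  output : ∀ X Y, σ X ∘L Φ ∘L ρ Y - σ Y ∘L Φ ∘L ρ X = γs X Y ∘L Φ
  linkage : ∀ X Y, γs X Y - γ X Y = Complex.I •
      (σ X ∘L Φ ∘L adjoint Φ ∘L σ Y - σ Y ∘L Φ ∘L adjoint Φ ∘L σ X)

namespace IsVessel

variable {g : Type*} [LieRing g] [LieAlgebra ℝ g]
  {H : Type*} [NormedAddCommGroup H] [InnerProductSpace ℂ H] [CompleteSpace H]
  {E : Type*} [NormedAddCommGroup E] [InnerProductSpace ℂ E] [CompleteSpace E]
  {ρ : g → H →L[ℂ] H} {Φ : H →L[ℂ] E} {σ : g → E →L[ℂ] E} {γ γs : g → g → E →L[ℂ] E}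

theorem γ_eq_adjoint_add (hV : IsVessel ρ Φ σ γ γs) (X Y : g) :
    γ X Y = adjoint (γ X Y) + Complex.I • σ ⁅X, Y⁆ :=
  sub_eq_iff_eq_add'.mp (hV.second X Y)

theorem adjoint_comp_adjoint_γ (hV : IsVessel ρ Φ σ γ γs) (X Y : g) :
    adjoint Φ ∘L adjoint (γ X Y) =
      ρ Y ∘L adjoint Φ ∘L σ X - ρ X ∘L adjoint Φ ∘L σ Y :=
  calc adjoint Φ ∘L adjoint (γ X Y)
    _ = adjoint (γ X Y ∘L Φ) := (adjoint_comp _ _).symm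
    _ = adjoint (σ X ∘L Φ ∘L adjoint (ρ Y) - σ Y ∘L Φ ∘L adjoint (ρ X)) := by
      rw [hV.input X Y]
    _ = ρ Y ∘L adjoint Φ ∘L σ X - ρ X ∘L adjoint Φ ∘L σ Y := by
      simp only [map_sub, adjoint_comp, adjoint_adjoint, hV.σ_sa, comp_assoc]

end IsVessel

theorem stmt_11_general {g : Type*} [LieRing g] [LieAlgebra ℝ g]
    {H : Type*} [NormedAddCommGroup H] [InnerProductSpace ℂ H] [CompleteSpace H]
    {E : Type*} [NormedAddCommGroup E] [InnerProductSpace ℂ E] [CompleteSpace E]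
    (ρ : g → H →L[ℂ] H) (Φ : H →L[ℂ] E) (σ : g → E →L[ℂ] E)
    (γ γs : g → g → E →L[ℂ] E)
    (hV : IsVessel ρ Φ σ γ γs) (X Y : g) :
    adjoint Φ ∘L γ X Y =
      ρ Y ∘L adjoint Φ ∘L σ X - ρ X ∘L adjoint Φ ∘L σ Y
        + Complex.I • (adjoint Φ ∘L σ ⁅X, Y⁆) :=
  calc adjoint Φ ∘L γ X Y
    _ = adjoint Φ ∘L (adjoint (γ X Y) + Complex.I • σ ⁅X, Y⁆) :=
      congrArg (adjoint Φ ∘L ·) (hV.γ_eq_adjoint_add X Y)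
    _ = adjoint Φ ∘L adjoint (γ X Y) + Complex.I • (adjoint Φ ∘L σ ⁅X, Y⁆) := by
      rw [comp_add, comp_smul]
    _ = ρ Y ∘L adjoint Φ ∘L σ X - ρ X ∘L adjoint Φ ∘L σ Y
        + Complex.I • (adjoint Φ ∘L σ ⁅X, Y⁆) := by
      rw [hV.adjoint_comp_adjoint_γ X Y]

/-- In any `𝔤`-operator vessel,
`Φ*γ(X,Y) = ρ(Y)Φ*σ(X) − ρ(X)Φ*σ(Y) + i Φ*σ([X,Y])` for all `X, Y ∈ 𝔤`. -/
theorem stmt_11 {g : Type*} [LieRing g] [LieAlgebra ℝ g] [FiniteDimensional ℝ g]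
    {H : Type*} [NormedAddCommGroup H] [InnerProductSpace ℂ H] [CompleteSpace H]
    {E : Type*} [NormedAddCommGroup E] [InnerProductSpace ℂ E] [CompleteSpace E]
    (ρ : g → H →L[ℂ] H) (Φ : H →L[ℂ] E) (σ : g → E →L[ℂ] E)
    (γ γs : g → g → E →L[ℂ] E)
    (hV : IsVessel ρ Φ σ γ γs) :
    ∀ X Y : g, adjoint Φ ∘L γ X Y =
      ρ Y ∘L adjoint Φ ∘L σ X - ρ X ∘L adjoint Φ ∘L σ Y
        + Complex.I • (adjoint Φ ∘L σ ⁅X, Y⁆) := by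
  exact stmt_11_general ρ Φ σ γ γs hV
end

section
/- Let 𝔤 be a Lie algebra over ℂ and let M be a module over 𝔤 (a ℂ-vector space with a Lie module action of 𝔤). Assume there exists X ∈ 𝔤 such that the adjoint map ad_X : 𝔤 → 𝔤 is nilpotent and the action map m ↦ X • m is bijective on M. Then: (a) the only m ∈ M satisfying Y • m = 0 for all Y ∈ 𝔤 is m = 0; and (b) for every ℂ-linear map f : 𝔤 → M satisfying the cocycle identity Y • f(Z) − Z • f(Y) − f([Y,Z]) = 0 for all Y, Z ∈ 𝔤, there exists m ∈ M such that f(Y) = Y • m for all Y ∈ 𝔤. In other words, the zeroth and first Lie algebra cohomology groups of 𝔤 with coefficients in M vanish: H⁰(𝔤, M) = H¹(𝔤, M) = 0. -/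
/-!
Modulo a coboundary, surjectivity of `X` on `M` lets us assume that a cocycle `D` vanishes at `X`.
The cocycle identity then says that `D` intertwines `ad X` with the action of `X` on `M`. Every
element of the Lie algebra is killed by a power of the former, while the latter is injective, so
`D = 0`.
-/

theorem linearMap_eq_zero_of_semiconj_of_injective {R A B : Type*} [Semiring R]
    [AddCommMonoid A] [Module R A] [AddCommMonoid B] [Module R B]
    {φ : A →ₗ[R] B} {S : Module.End R A} {T : Module.End R B}
    (hφ : Function.Semiconj φ S T) (hS : ∀ a, ∃ n : ℕ, (S ^ n) a = 0)
    (hT : Function.Injective T) : φ = 0 := by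
  ext a
  obtain ⟨n, hn⟩ := hS a
  apply hT.iterate n
  calc T^[n] (φ a) = φ ((S ^ n) a) := by
        rw [Module.End.pow_apply, (hφ.iterate_right n).eq]
    _ = T^[n] 0 := by rw [hn, map_zero, iterate_map_zero]

section LieModule

variable {R L M : Type*} [CommRing R] [LieRing L] [LieAlgebra R L]
  [AddCommGroup M] [Module R M] [LieRingModule L M] [LieModule R L M] {x : L}

theorem maxTrivSubmodule_eq_bot_of_injective_lie
    (hinj : Function.Injective (fun m : M => ⁅x, m⁆)) :
    LieModule.maxTrivSubmodule R L M = ⊥ := by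
  refine (LieSubmodule.eq_bot_iff _).mpr fun m hm => hinj ?_
  simpa only [lie_zero] using (LieModule.mem_maxTrivSubmodule R L M m).mp hm x

theorem semiconj_ad_toEnd_of_lieDerivation_apply_eq_zero {D : LieDerivation R L M}
    (hD : D x = 0) :
    Function.Semiconj D (LieAlgebra.ad R L x) (LieModule.toEnd R L M x) := fun y => by
  rw [LieAlgebra.ad_apply, D.apply_lie_eq_sub, hD, lie_zero, sub_zero,
    LieModule.toEnd_apply_apply]

theorem lieDerivation_eq_zero_of_apply_eq_zero {D : LieDerivation R L M} (hD : D x = 0)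
    (hnil : ∀ y, ∃ n : ℕ, (LieAlgebra.ad R L x ^ n) y = 0)
    (hinj : Function.Injective (fun m : M => ⁅x, m⁆)) : D = 0 :=
  LieDerivation.ext <| LinearMap.congr_fun <| linearMap_eq_zero_of_semiconj_of_injective
    (φ := D.toLinearMap) (semiconj_ad_toEnd_of_lieDerivation_apply_eq_zero hD) hnil hinj

theorem lieDerivation_inner_surjective_of_bijective_lie
    (hnil : ∀ y, ∃ n : ℕ, (LieAlgebra.ad R L x ^ n) y = 0)
    (hbij : Function.Bijective (fun m : M => ⁅x, m⁆)) :
    Function.Surjective (LieDerivation.inner R L M) := fun D => by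
  obtain ⟨m, hm : ⁅x, m⁆ = D x⟩ := hbij.surjective (D x)
  have hDx : (D - LieDerivation.inner R L M m) x = 0 := by
    rw [LieDerivation.sub_apply, LieDerivation.inner_apply_apply, hm, sub_self]
  have hD := lieDerivation_eq_zero_of_apply_eq_zero hDx hnil hbij.injective
  exact ⟨m, (sub_eq_zero.mp hD).symm⟩

theorem stmt_12_general (hnil : ∀ y, ∃ n : ℕ, (LieAlgebra.ad R L x ^ n) y = 0)
    (hbij : Function.Bijective (fun m : M => ⁅x, m⁆)) :
    (∀ m : M, (∀ y : L, ⁅y, m⁆ = 0) → m = 0) ∧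
    (∀ f : L →ₗ[R] M, (∀ y z : L, ⁅y, f z⁆ - ⁅z, f y⁆ - f ⁅y, z⁆ = 0) →
      ∃ m : M, ∀ y : L, f y = ⁅y, m⁆) := by
  refine ⟨fun m hm => ?_, fun f hf => ?_⟩
  · have hmem := (LieModule.mem_maxTrivSubmodule R L M m).mpr hm
    rwa [maxTrivSubmodule_eq_bot_of_injective_lie hbij.injective, LieSubmodule.mem_bot] at hmem
  · let D : LieDerivation R L M := ⟨f, fun y z => (sub_eq_zero.mp (hf y z)).symm⟩
    obtain ⟨m, hm⟩ := lieDerivation_inner_surjective_of_bijective_lie hnil hbij D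
    exact ⟨m, fun y => (LieDerivation.congr_fun hm y).symm⟩

end LieModule

/-- If a complex Lie algebra `𝔤` has an ad-nilpotent element `X` acting
bijectively on a `𝔤`-module `M`, then `H⁰(𝔤, M) = H¹(𝔤, M) = 0`: the only invariant
element of `M` is `0`, and every 1-cocycle `f : 𝔤 → M` is a 1-coboundary. -/
theorem stmt_12 {g : Type*} [LieRing g] [LieAlgebra ℂ g]
    {M : Type*} [AddCommGroup M] [Module ℂ M] [LieRingModule g M] [LieModule ℂ g M]
    (X : g) (hnil : IsNilpotent (LieAlgebra.ad ℂ g X))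
    (hbij : Function.Bijective (fun m : M => ⁅X, m⁆)) :
    (∀ m : M, (∀ Y : g, ⁅Y, m⁆ = 0) → m = 0) ∧
    (∀ f : g →ₗ[ℂ] M, (∀ Y Z : g, ⁅Y, f Z⁆ - ⁅Z, f Y⁆ - f ⁅Y, Z⁆ = 0) →
      ∃ m : M, ∀ Y : g, f Y = ⁅Y, m⁆) := by
  obtain ⟨n, hn⟩ := hnil
  exact stmt_12_general (fun Y => ⟨n, LinearMap.congr_fun hn Y⟩) hbij
end

section
/- Assume the ax+b vessel conditions for data (ℋ, ℰ, A₁, A₂, Φ, σ₁, σ₂, γ, γ_*). Set τ = (γ + γ*)/2 and τ_* = (γ_* + (γ_*)*)/2 (the real parts of γ and γ_*). Let Ω ⊆ ℂ be open, assume that for every z ∈ Ω the operator A₂ − 2πz·I is invertible, and let u : Ω → ℰ be a differentiable function satisfying z·σ₂·u′(z) − 2πi·z·σ₁·u(z) + i·τ·u(z) = 0 for all z ∈ Ω. Define y : Ω → ℰ by y(z) = u(z) − i·Φ(A₂ − 2πz·I)⁻¹Φ*σ₂·u(z), i.e. y(z) = S(z)u(z) where S(z) = I_ℰ − i·Φ(A₂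 − 2πz·I)⁻¹Φ*σ₂. Then y is differentiable on Ω and satisfies z·σ₂·y′(z) − 2πi·z·σ₁·y(z) + i·τ_*·y(z) = 0 for all z ∈ Ω. -/
open ContinuousLinearMap

/-!
Put `S(w) = 1 + iΦ(w - A₂)⁻¹Ψσ₂` and `S̃(w) = 1 + iσ₂Φ(w - A₂)⁻¹Ψ`, where `Ψ = Φ*` and `w = 2πz`,
so that `σ₂S = S̃σ₂`. The commutation relation `[A₁, A₂] = iA₂` passes to the resolvent of `A₂`;
combined with the input, output and linkage conditions it gives
`wσ₂S'(w) = iw(σ₁S - S̃σ₁) - i(τ_*S - S̃τ)`.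
Hence the output differential expression of `Su` is `S̃` applied to the input expression of `u`.
-/

section Resolvent

variable {R A : Type*} [CommSemiring R] [Ring A] [Algebra R A] {a : A} {r : R}

theorem mem_resolventSet_iff_isUnit_sub_smul_one :
    r ∈ resolventSet R a ↔ IsUnit (a - r • (1 : A)) := by
  rw [spectrum.mem_resolventSet_iff, Algebra.algebraMap_eq_smul_one, IsUnit.sub_iff]

theorem ringInverse_sub_smul_one_eq_neg_resolvent (hr : r ∈ resolventSet R a) :
    Ring.inverse (a - r • (1 : A)) = -resolvent a r := by
  obtain ⟨U, hU⟩ := hr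
  rw [resolvent, ← Algebra.algebraMap_eq_smul_one, ← neg_sub (algebraMap R A r), ← hU,
    ← Units.val_neg, Ring.inverse_unit, Ring.inverse_unit, inv_neg, Units.val_neg]

theorem mul_resolvent_eq_smul_sub_one (hr : r ∈ resolventSet R a) :
    a * resolvent a r = r • resolvent a r - 1 := by
  have h : (algebraMap R A r - a) * resolvent a r = 1 := Ring.mul_inverse_cancel _ hr
  rw [sub_mul, ← Algebra.smul_def] at h
  rw [← h, sub_sub_cancel]

theorem resolvent_mul_eq_smul_sub_one (hr : r ∈ resolventSet R a) :
    resolvent a r * a = r • resolvent a r - 1 := by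
  have h : resolvent a r * (algebraMap R A r - a) = 1 := Ring.inverse_mul_cancel _ hr
  rw [mul_sub, ← Algebra.commutes, ← Algebra.smul_def] at h
  rw [← h, sub_sub_cancel]

theorem resolvent_mul_sub_mul_resolvent (hr : r ∈ resolventSet R a) (b : A) :
    resolvent a r * b - b * resolvent a r
      = resolvent a r * (a * b - b * a) * resolvent a r := by
  symm
  calc resolvent a r * (a * b - b * a) * resolvent a r
      = resolvent a r * a * b * resolvent a r - resolvent a r * b * (a * resolvent a r) := by
        noncomm_ring
    _ = (r • resolvent a r - 1) * b * resolvent a r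
          - resolvent a r * b * (r • resolvent a r - 1) := by
        rw [resolvent_mul_eq_smul_sub_one hr, mul_resolvent_eq_smul_sub_one hr]
    _ = resolvent a r * b - b * resolvent a r := by
        simp only [sub_mul, mul_sub, smul_mul_assoc, mul_smul_comm, one_mul, mul_one]
        abel

theorem resolvent_mul_sub_mul_resolvent_of_commutator_eq_smul {b : A} {c : R}
    (hr : r ∈ resolventSet R a) (hab : b * a - a * b = c • a) :
    resolvent a r * b - b * resolvent a r = c • (resolvent a r - r • resolvent a r ^ 2) := by
  rw [resolvent_mul_sub_mul_resolvent hr, ← neg_sub (b * a), hab, mul_neg, mul_smul_comm,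
    resolvent_mul_eq_smul_sub_one hr, neg_mul, smul_mul_assoc, sub_mul, smul_mul_assoc, one_mul,
    ← sq, ← smul_neg, neg_sub]

end Resolvent

section CharacteristicFunction

variable {H E F : Type*} [NormedAddCommGroup H] [NormedSpace ℂ H]
  [NormedAddCommGroup E] [NormedSpace ℂ E] [NormedAddCommGroup F] [NormedSpace ℂ F]

/-- The characteristic function `w ↦ 1 + iΦ(w - A)⁻¹Ψ` of the colligation `(A, Φ, Ψ)`. In the
notation of the vessel, `S(z)` is its value at `w = 2πz` for `A = A₂` and `Ψ = Φ*σ₂`; the sign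
differs because Mathlib's resolvent is `(w - A)⁻¹`. -/
noncomputable def characteristicFun (A : H →L[ℂ] H) (Φ : H →L[ℂ] E) (Ψ : E →L[ℂ] H) (w : ℂ) :
    E →L[ℂ] E :=
  1 + Complex.I • (Φ ∘L resolvent A w ∘L Ψ)

theorem comp_characteristicFun (A : H →L[ℂ] H) (Φ : H →L[ℂ] E) (Ψ : F →L[ℂ] H)
    (σ : E →L[ℂ] F) (w : ℂ) :
    σ ∘L characteristicFun A Φ (Ψ ∘L σ) w = characteristicFun A (σ ∘L Φ) Ψ w ∘L σ := by
  ext x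
  simp [characteristicFun]

theorem hasDerivAt_characteristicFun [CompleteSpace H] {A : H →L[ℂ] H} (Φ : H →L[ℂ] E)
    (Ψ : E →L[ℂ] H) {w : ℂ} (hw : w ∈ resolventSet ℂ A) :
    HasDerivAt (characteristicFun A Φ Ψ)
      (-(Complex.I • (Φ ∘L (resolvent A w ^ 2) ∘L Ψ))) w := by
  have hres := spectrum.hasDerivAt_resolvent_const_left hw
  have hcomp := (hasDerivAt_const w Φ).clm_comp (hres.clm_comp (hasDerivAt_const w Ψ))
  refine ((hcomp.const_smul Complex.I).const_add 1).congr_deriv ?_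
  simp

theorem hasDerivAt_characteristicFun_mul_apply [CompleteSpace H] {A : H →L[ℂ] H}
    (Φ : H →L[ℂ] E) (Ψ : E →L[ℂ] H) {c z : ℂ} (hz : c * z ∈ resolventSet ℂ A)
    {u : ℂ → E} {u' : E} (hu : HasDerivAt u u' z) :
    HasDerivAt (fun ζ ↦ characteristicFun A Φ Ψ (c * ζ) (u ζ))
      (c • deriv (characteristicFun A Φ Ψ) (c * z) (u z) + characteristicFun A Φ Ψ (c * z) u')
      z := by
  have hS := (hasDerivAt_characteristicFun Φ Ψ hz).differentiableAt.hasDerivAt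
  exact (hS.scomp z (hasDerivAt_const_mul c)).clm_apply hu

end CharacteristicFunction

/-- The ax+b vessel conditions freed of adjoints, for operators on normed spaces: `Ψ` plays the
role of `Φ*`, and `τ = γ - (i/2)σ₂` and `τs = γs - (i/2)σ₂` that of the real parts of `γ` and `γs`.
The field `input` is the adjoint of the input vessel condition, since `γ* = τ - (i/2)σ₂`. -/
structure IsAxbNode {H E : Type*} [NormedAddCommGroup H] [NormedSpace ℂ H]
    [NormedAddCommGroup E] [NormedSpace ℂ E]
    (A₁ A₂ : H →L[ℂ] H) (Φ : H →L[ℂ] E) (Ψ : E →L[ℂ] H) (σ₁ σ₂ τ τs : E →L[ℂ] E) :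
    Prop where
  comm : A₁ ∘L A₂ - A₂ ∘L A₁ = Complex.I • A₂
  input : A₂ ∘L Ψ ∘L σ₁ - A₁ ∘L Ψ ∘L σ₂ = Ψ ∘L (τ - (Complex.I / 2) • σ₂)
  output : σ₁ ∘L Φ ∘L A₂ - σ₂ ∘L Φ ∘L A₁ = (τs + (Complex.I / 2) • σ₂) ∘L Φ
  linkage : τs - τ = Complex.I • (σ₁ ∘L Φ ∘L Ψ ∘L σ₂ - σ₂ ∘L Φ ∘L Ψ ∘L σ₁)

namespace IsAxbNode

variable {H E : Type*} [NormedAddCommGroup H] [NormedSpace ℂ H]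
  [NormedAddCommGroup E] [NormedSpace ℂ E]
  {A₁ A₂ : H →L[ℂ] H} {Φ : H →L[ℂ] E} {Ψ : E →L[ℂ] H} {σ₁ σ₂ τ τs : E →L[ℂ] E}

theorem output_resolvent_sub_resolvent_input (hN : IsAxbNode A₁ A₂ Φ Ψ σ₁ σ₂ τ τs) {w : ℂ}
    (hw : w ∈ resolventSet ℂ A₂) :
    σ₁ ∘L Φ ∘L (A₂ * resolvent A₂ w) ∘L Ψ ∘L σ₂ - σ₂ ∘L Φ ∘L (resolvent A₂ w * A₂) ∘L Ψ ∘L σ₁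
      = τs ∘L Φ ∘L resolvent A₂ w ∘L Ψ ∘L σ₂ - σ₂ ∘L Φ ∘L resolvent A₂ w ∘L Ψ ∘L τ
        + (Complex.I * w) • (σ₂ ∘L Φ ∘L (resolvent A₂ w ^ 2) ∘L Ψ ∘L σ₂) := by
  ext x
  have hinput := congr(σ₂ (Φ (resolvent A₂ w ($(hN.input) x))))
  have houtput := congr($(hN.output) (resolvent A₂ w (Ψ (σ₂ x))))
  have hcomm := congr(σ₂ (Φ ($(resolvent_mul_sub_mul_resolvent_of_commutator_eq_smul hw hN.comm)
    (Ψ (σ₂ x)))))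
  simp only [sub_apply, add_apply, smul_apply, comp_apply, mul_apply_eq_comp, map_sub, map_smul]
    at hinput houtput hcomm ⊢
  linear_combination (norm := module) houtput - hinput - hcomm

theorem smul_comp_deriv_characteristicFun [CompleteSpace H]
    (hN : IsAxbNode A₁ A₂ Φ Ψ σ₁ σ₂ τ τs) {w : ℂ} (hw : w ∈ resolventSet ℂ A₂) :
    w • (σ₂ ∘L deriv (characteristicFun A₂ Φ (Ψ ∘L σ₂)) w)
      = (Complex.I * w) • (σ₁ ∘L characteristicFun A₂ Φ (Ψ ∘L σ₂) w
          - characteristicFun A₂ (σ₂ ∘L Φ) Ψ w ∘L σ₁)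
        - Complex.I • (τs ∘L characteristicFun A₂ Φ (Ψ ∘L σ₂) w
          - characteristicFun A₂ (σ₂ ∘L Φ) Ψ w ∘L τ) := by
  rw [(hasDerivAt_characteristicFun Φ (Ψ ∘L σ₂) hw).deriv]
  ext x
  have hresolvent := congr($(hN.output_resolvent_sub_resolvent_input hw) x)
  have hlinkage := congr($(hN.linkage) x)
  rw [mul_resolvent_eq_smul_sub_one hw, resolvent_mul_eq_smul_sub_one hw] at hresolvent
  simp only [characteristicFun, sub_apply, add_apply, neg_apply, smul_apply, comp_apply,
    one_apply_eq_self, map_sub, map_add, map_neg, map_smul] at hresolvent hlinkage ⊢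
  linear_combination (norm := skip) hresolvent + Complex.I • hlinkage
  match_scalars <;> grind [Complex.I_sq]

theorem output_characteristicFun_eq_characteristicFun_input [CompleteSpace H]
    (hN : IsAxbNode A₁ A₂ Φ Ψ σ₁ σ₂ τ τs) {c z : ℂ} (hz : c * z ∈ resolventSet ℂ A₂) (v v' : E) :
    z • σ₂ (c • deriv (characteristicFun A₂ Φ (Ψ ∘L σ₂)) (c * z) v
          + characteristicFun A₂ Φ (Ψ ∘L σ₂) (c * z) v')
        - (c * Complex.I * z) • σ₁ (characteristicFun A₂ Φ (Ψ ∘L σ₂) (c * z) v)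
        + Complex.I • τs (characteristicFun A₂ Φ (Ψ ∘L σ₂) (c * z) v)
      = characteristicFun A₂ (σ₂ ∘L Φ) Ψ (c * z)
          (z • σ₂ v' - (c * Complex.I * z) • σ₁ v + Complex.I • τ v) := by
  have hderiv := congr($(hN.smul_comp_deriv_characteristicFun hz) v)
  have hcomp := congr($(comp_characteristicFun A₂ Φ Ψ σ₂ (c * z)) v')
  simp only [sub_apply, smul_apply, comp_apply] at hderiv hcomp
  simp only [map_add, map_sub, map_smul]
  linear_combination (norm := module) hderiv + z • hcomp

end IsAxbNode

theorem IsAxbVessel.isAxbNode {H E : Type*} [NormedAddCommGroup H] [InnerProductSpace ℂ H]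
    [CompleteSpace H] [NormedAddCommGroup E] [InnerProductSpace ℂ E] [CompleteSpace E]
    {A₁ A₂ : H →L[ℂ] H} {Φ : H →L[ℂ] E} {σ₁ σ₂ γ γs : E →L[ℂ] E}
    (hV : IsAxbVessel A₁ A₂ Φ σ₁ σ₂ γ γs) :
    IsAxbNode A₁ A₂ Φ (adjoint Φ) σ₁ σ₂
      ((2⁻¹ : ℂ) • (γ + adjoint γ)) ((2⁻¹ : ℂ) • (γs + adjoint γs)) := by
  have hγ : adjoint γ = γ - Complex.I • σ₂ := by rw [← hV.second, sub_sub_cancel]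
  have hγs : adjoint γs = γs - Complex.I • σ₂ := by rw [← hV.second_s, sub_sub_cancel]
  have hinput : A₂ ∘L adjoint Φ ∘L σ₁ - A₁ ∘L adjoint Φ ∘L σ₂ = adjoint Φ ∘L adjoint γ := by
    simpa only [map_sub, adjoint_comp, adjoint_adjoint, hV.σ₁_sa, hV.σ₂_sa, comp_assoc]
      using congr(adjoint $(hV.input))
  refine ⟨hV.comm, ?_, ?_, ?_⟩
  · rw [hinput, hγ]
    congr 1
    module
  · rw [hV.output, hγs]
    congr 1
    module
  · rw [← hV.linkage, hγ, hγs]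
    module

theorem stmt_14_general {H : Type*} [NormedAddCommGroup H] [NormedSpace ℂ H] [CompleteSpace H]
    {E : Type*} [NormedAddCommGroup E] [NormedSpace ℂ E]
    {A₁ A₂ : H →L[ℂ] H} {Φ : H →L[ℂ] E} {Ψ : E →L[ℂ] H} {σ₁ σ₂ τ τs : E →L[ℂ] E}
    (hN : IsAxbNode A₁ A₂ Φ Ψ σ₁ σ₂ τ τs) {Ω : Set ℂ} (hΩ : IsOpen Ω)
    (hinv : ∀ z ∈ Ω, IsUnit (A₂ - (2 * (Real.pi : ℂ) * z) • (1 : H →L[ℂ] H)))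
    {u u' : ℂ → E} (hu : ∀ z ∈ Ω, HasDerivAt u (u' z) z)
    (hode : ∀ z ∈ Ω, z • σ₂ (u' z) - (2 * (Real.pi : ℂ) * Complex.I * z) • σ₁ (u z)
      + Complex.I • τ (u z) = 0)
    {y : ℂ → E}
    (hy : ∀ z ∈ Ω, y z = u z - Complex.I •
      Φ (Ring.inverse (A₂ - (2 * (Real.pi : ℂ) * z) • (1 : H →L[ℂ] H)) (Ψ (σ₂ (u z))))) :
    ∃ y' : ℂ → E, ∀ z ∈ Ω, HasDerivAt y (y' z) z ∧
      z • σ₂ (y' z) - (2 * (Real.pi : ℂ) * Complex.I * z) • σ₁ (y z)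
        + Complex.I • τs (y z) = 0 := by
  let S := characteristicFun A₂ Φ (Ψ ∘L σ₂)
  have hres : ∀ z ∈ Ω, 2 * (Real.pi : ℂ) * z ∈ resolventSet ℂ A₂ := fun z hz ↦
    mem_resolventSet_iff_isUnit_sub_smul_one.2 (hinv z hz)
  have hyS : ∀ z ∈ Ω, y z = S (2 * Real.pi * z) (u z) := fun z hz ↦ by
    rw [hy z hz, ringInverse_sub_smul_one_eq_neg_resolvent (hres z hz)]
    simp [S, characteristicFun]
  refine ⟨fun z ↦ (2 * Real.pi : ℂ) • deriv S (2 * Real.pi * z) (u z)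
    + S (2 * Real.pi * z) (u' z), fun z hz ↦ ⟨?_, ?_⟩⟩
  · exact (hasDerivAt_characteristicFun_mul_apply Φ (Ψ ∘L σ₂) (hres z hz) (hu z hz)
      ).congr_of_eventuallyEq (Set.EqOn.eventuallyEq_of_mem hyS (hΩ.mem_nhds hz))
  · rw [hyS z hz, hN.output_characteristicFun_eq_characteristicFun_input (hres z hz), hode z hz,
      map_zero]

/-- Multiplication by the characteristic function
`S(z) = I − iΦ(A₂ − 2πz)⁻¹Φ*σ₂` of an ax+b vessel maps solutions of the complexified input
compatibility ODE to solutions of the complexified output compatibility ODE. -/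
theorem stmt_14 {H : Type*} [NormedAddCommGroup H] [InnerProductSpace ℂ H] [CompleteSpace H]
    {E : Type*} [NormedAddCommGroup E] [InnerProductSpace ℂ E] [CompleteSpace E]
    (A₁ A₂ : H →L[ℂ] H) (Φ : H →L[ℂ] E) (σ₁ σ₂ γ γs : E →L[ℂ] E)
    (hV : IsAxbVessel A₁ A₂ Φ σ₁ σ₂ γ γs)
    (τ τs : E →L[ℂ] E)
    (hτ : τ = (2⁻¹ : ℂ) • (γ + adjoint γ))
    (hτs : τs = (2⁻¹ : ℂ) • (γs + adjoint γs))
    (Ω : Set ℂ) (hΩ : IsOpen Ω)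
    (hinv : ∀ z ∈ Ω, IsUnit (A₂ - (2 * (Real.pi : ℂ) * z) • (1 : H →L[ℂ] H)))
    (u : ℂ → E) (u' : ℂ → E)
    (hu : ∀ z ∈ Ω, HasDerivAt u (u' z) z)
    (hode : ∀ z ∈ Ω, z • σ₂ (u' z) - (2 * (Real.pi : ℂ) * Complex.I * z) • σ₁ (u z)
      + Complex.I • τ (u z) = 0)
    (y : ℂ → E)
    (hy : ∀ z ∈ Ω, y z = u z - Complex.I •
      Φ (Ring.inverse (A₂ - (2 * (Real.pi : ℂ) * z) • (1 : H →L[ℂ] H))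
        (adjoint Φ (σ₂ (u z))))) :
    ∃ y' : ℂ → E, ∀ z ∈ Ω, HasDerivAt y (y' z) z ∧
      z • σ₂ (y' z) - (2 * (Real.pi : ℂ) * Complex.I * z) • σ₁ (y z)
        + Complex.I • τs (y z) = 0 := by
  subst hτ hτs
  exact stmt_14_general hV.isAxbNode hΩ hinv hu hode hy
end
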